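/- Let b_n be the number of permutations π of [n] for which every partial sum Σ_{j=1}^k (π(j) - j) (for k ∈ [n]) is at most 2. Then b_n = n! for 1 ≤ n ≤ 3, b_4 = 12, and b_n = b_{n-1} + b_{n-2} + 3·b_{n-3} + b_{n-4} for n ≥ 5. Moreover, for n ≥ 5, every such permutation has the form α ⊕ β with β ∈ {1, 21, 231, 312, 321, 3142} and α a conforming permutation of length n - |β|. -/

import Mathlib

/-!
The partial sums `S_k` of `π` and the partial sums of its reverse-complement are the same numbers in
reverse order, so the condition `S_k ≤ 2` can be read from the right end of `π`. Since `S_n = 0`,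
the bounds at `k = n - 1, …, n - 4` restrict the last values of `π` so strongly that, using
injectivity, one of the six blocks `1, 21, 231, 312, 321, 3142` must appear as the final direct
summand (`suffix_cases`; this only needs `n ≥ 4`), and at most one does.

When the final `m` positions carry a block `β`, the permutation is `α ⊕ β`
(`exists_dsum_of_matches`), and `α ⊕ β` is conforming exactly when `α` and `β` both are
(`conforming_dsum`), because the partial sums of `α` return to `0` at the end of `α`. Hence the
conforming permutations ending in the block `β` are counted by `bCount (n - |β|)`, and summing over
the six blocks gives the recurrence for all `n ≥ 4`. The values for `n ≤ 3` are a finite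
computation, and `bCount 4 = 12` is then the recurrence at `n = 4`.
-/

/-- `π` is conforming: every partial sum of signed displacements
`Σ_{j=1}^k (π(j) - j)` is at most 2. -/
def Conforming {n : ℕ} (π : Equiv.Perm (Fin n)) : Prop :=
  ∀ k : ℕ, k ≤ n → (∑ j : Fin n, if (j : ℕ) < k then ((π j : ℤ) - (j : ℤ)) else 0) ≤ 2

/-- `b n`: the number of conforming permutations of `[n]`. -/
noncomputable def bCount (n : ℕ) : ℕ := Nat.card {π : Equiv.Perm (Fin n) // Conforming π}

/-- The six possible suffix blocks `β ∈ {1, 21, 231, 312, 321, 3142}` (0-based). -/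
def suffixBlocks : List (List ℕ) :=
  [[0], [1, 0], [1, 2, 0], [2, 0, 1], [2, 1, 0], [2, 0, 3, 1]]

/-- The partial sum `Σ_{j < k} (π(j) - j)` (positions and values counted from `0`). -/
def pSum {n : ℕ} (π : Equiv.Perm (Fin n)) (k : ℕ) : ℤ :=
  ∑ j : Fin n, if (j : ℕ) < k then ((π j : ℤ) - (j : ℤ)) else 0

theorem conforming_iff {n : ℕ} (π : Equiv.Perm (Fin n)) :
    Conforming π ↔ ∀ k ≤ n, pSum π k ≤ 2 := Iff.rfl

theorem pSum_of_le {n : ℕ} (π : Equiv.Perm (Fin n)) {k : ℕ} (hk : n ≤ k) : pSum π k = 0 := by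
  have h : pSum π k = ∑ j : Fin n, (((π j : ℕ) : ℤ) - ((j : ℕ) : ℤ)) :=
    Finset.sum_congr rfl fun j _ => if_pos (by omega)
  rw [h, Finset.sum_sub_distrib, Equiv.sum_comp π (fun j : Fin n => ((j : ℕ) : ℤ)), sub_self]

/-- The direct sum `α ⊕ β`: `α` acts on the first `k` positions, `β` on the last `m`. -/
def dsum {k m : ℕ} (α : Equiv.Perm (Fin k)) (β : Equiv.Perm (Fin m)) : Equiv.Perm (Fin (k + m)) :=
  finSumFinEquiv.permCongr (Equiv.sumCongr α β)

@[simp] theorem dsum_castAdd {k m : ℕ} (α : Equiv.Perm (Fin k)) (β : Equiv.Perm (Fin m))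
    (i : Fin k) : dsum α β (Fin.castAdd m i) = Fin.castAdd m (α i) := by
  simp [dsum, Equiv.permCongr_apply]

@[simp] theorem dsum_natAdd {k m : ℕ} (α : Equiv.Perm (Fin k)) (β : Equiv.Perm (Fin m))
    (j : Fin m) : dsum α β (Fin.natAdd k j) = Fin.natAdd k (β j) := by
  simp [dsum, Equiv.permCongr_apply]

theorem pSum_dsum {k m : ℕ} (α : Equiv.Perm (Fin k)) (β : Equiv.Perm (Fin m)) (l : ℕ) :
    pSum (dsum α β) l = pSum α l + pSum β (l - k) := by
  unfold pSum
  rw [Fin.sum_univ_add]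
  congr 1
  · simp
  · refine Finset.sum_congr rfl fun j _ => ?_
    have : k + (j : ℕ) < l ↔ (j : ℕ) < l - k := by omega
    simp [this]

theorem conforming_dsum {k m : ℕ} (α : Equiv.Perm (Fin k)) (β : Equiv.Perm (Fin m)) :
    Conforming (dsum α β) ↔ Conforming α ∧ Conforming β := by
  simp only [conforming_iff, pSum_dsum]
  constructor
  · refine fun h => ⟨fun l hl => ?_, fun l hl => ?_⟩
    · have h0 : pSum β (l - k) = 0 := by simp [pSum, Nat.sub_eq_zero_of_le hl]
      have := h l (by omega)
      omega
    · have := h (k + l) (by omega)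
      rw [pSum_of_le α (by omega), Nat.add_sub_cancel_left] at this
      omega
  · rintro ⟨ha, hb⟩ l hl
    rcases le_total l k with h | h
    · have h0 : pSum β (l - k) = 0 := by simp [pSum, Nat.sub_eq_zero_of_le h]
      have := ha l h
      omega
    · have := hb (l - k) (by omega)
      rw [pSum_of_le α h]
      omega

/-- The last `m` positions of `π` carry the block `β`, shifted to the top `m` values. -/
def Matches {k m : ℕ} (β : Equiv.Perm (Fin m)) (π : Equiv.Perm (Fin (k + m))) : Prop :=
  ∀ j : Fin m, π (Fin.natAdd k j) = Fin.natAdd k (β j)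

theorem exists_dsum_of_matches {k m : ℕ} {β : Equiv.Perm (Fin m)} {π : Equiv.Perm (Fin (k + m))}
    (h : Matches β π) : ∃ α : Equiv.Perm (Fin k), dsum α β = π := by
  -- The values `≥ k` are all taken on the last `m` positions, so the first `k` stay below `k`.
  have hlt : ∀ i : Fin k, (π (Fin.castAdd m i) : ℕ) < k := by
    intro i
    by_contra hge
    have hb := (π (Fin.castAdd m i)).isLt
    have h1 := h (β.symm ⟨(π (Fin.castAdd m i) : ℕ) - k, by omega⟩)
    rw [Equiv.apply_symm_apply] at h1
    have h2 : π (Fin.natAdd k (β.symm ⟨(π (Fin.castAdd m i) : ℕ) - k, by omega⟩))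
        = π (Fin.castAdd m i) := by
      rw [h1]; ext; simp; omega
    have h3 := congrArg Fin.val (π.injective h2)
    simp at h3
    omega
  have hinj : Function.Injective (fun i : Fin k => (⟨_, hlt i⟩ : Fin k)) := by
    intro i i' hii
    have h1 : (π (Fin.castAdd m i) : ℕ) = π (Fin.castAdd m i') := Fin.mk.inj hii
    exact Fin.castAdd_injective k m (π.injective (Fin.ext h1))
  refine ⟨Equiv.ofBijective _ (Finite.injective_iff_bijective.1 hinj), Equiv.ext fun x => ?_⟩
  refine Fin.addCases (fun i => ?_) (fun j => ?_) x
  · rw [dsum_castAdd]; ext; simp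
  · rw [dsum_natAdd, h j]

/-- Conforming permutations ending in a fixed conforming block `β` correspond to the conforming
permutations `α` in front of it. -/
theorem card_matches {k m : ℕ} {β : Equiv.Perm (Fin m)} (hβ : Conforming β) :
    Nat.card {π : Equiv.Perm (Fin (k + m)) // Conforming π ∧ Matches β π} = bCount k := by
  refine (Nat.card_congr (Equiv.ofBijective
    (fun α : {α : Equiv.Perm (Fin k) // Conforming α} =>
      (⟨dsum α.1 β, (conforming_dsum _ _).2 ⟨α.2, hβ⟩, dsum_natAdd α.1 β⟩ :
        {π : Equiv.Perm (Fin (k + m)) // Conforming π ∧ Matches β π})) ⟨?_, ?_⟩)).symm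
  · rintro ⟨α, ha⟩ ⟨α', ha'⟩ h
    refine Subtype.ext (Equiv.ext fun i => ?_)
    have h1 := congrArg (fun p => p.1 (Fin.castAdd m i)) h
    simp only [dsum_castAdd] at h1
    exact Fin.castAdd_injective k m h1
  · rintro ⟨π, hπ, hm⟩
    obtain ⟨α, rfl⟩ := exists_dsum_of_matches hm
    exact ⟨⟨α, ((conforming_dsum _ _).1 hπ).1⟩, rfl⟩

/-- The block `1`. -/
def blk1 : Equiv.Perm (Fin 1) := 1

/-- The block `21`. -/
def blk21 : Equiv.Perm (Fin 2) := ⟨![1, 0], ![1, 0], by decide, by decide⟩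

/-- The block `231`. -/
def blk231 : Equiv.Perm (Fin 3) := ⟨![1, 2, 0], ![2, 0, 1], by decide, by decide⟩

/-- The block `312`. -/
def blk312 : Equiv.Perm (Fin 3) := ⟨![2, 0, 1], ![1, 2, 0], by decide, by decide⟩

/-- The block `321`. -/
def blk321 : Equiv.Perm (Fin 3) := ⟨![2, 1, 0], ![2, 1, 0], by decide, by decide⟩

/-- The block `3142`. -/
def blk3142 : Equiv.Perm (Fin 4) := ⟨![2, 0, 3, 1], ![1, 3, 0, 2], by decide, by decide⟩

instance {n : ℕ} (π : Equiv.Perm (Fin n)) : Decidable (Conforming π) :=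
  inferInstanceAs (Decidable (∀ k : ℕ, k ≤ n →
    (∑ j : Fin n, if (j : ℕ) < k then ((π j : ℤ) - (j : ℤ)) else 0) ≤ 2))

instance {k m : ℕ} (β : Equiv.Perm (Fin m)) (π : Equiv.Perm (Fin (k + m))) :
    Decidable (Matches β π) :=
  inferInstanceAs (Decidable (∀ j : Fin m, π (Fin.natAdd k j) = Fin.natAdd k (β j)))

/-- The value of `π` at position `N + i`, as a natural number. -/
def val4 {N : ℕ} (π : Equiv.Perm (Fin (N + 4))) (i : Fin 4) : ℕ := π (Fin.natAdd N i)

section matches_iff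

variable {N : ℕ} (π : Equiv.Perm (Fin (N + 4)))

theorem matches_blk1 : Matches (k := N + 3) blk1 π ↔ val4 π 3 = N + 3 := by
  simp only [Matches, Fin.forall_fin_one, Fin.ext_iff]
  exact Iff.rfl

theorem matches_blk21 :
    Matches (k := N + 2) blk21 π ↔ val4 π 2 = N + 3 ∧ val4 π 3 = N + 2 := by
  simp only [Matches, Fin.forall_fin_two, Fin.ext_iff]
  exact Iff.rfl

theorem matches_blk231 : Matches (k := N + 1) blk231 π ↔
    val4 π 1 = N + 2 ∧ val4 π 2 = N + 3 ∧ val4 π 3 = N + 1 := by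
  simp only [Matches, Fin.forall_fin_succ, Fin.ext_iff, IsEmpty.forall_iff, and_true]
  exact Iff.rfl

theorem matches_blk312 : Matches (k := N + 1) blk312 π ↔
    val4 π 1 = N + 3 ∧ val4 π 2 = N + 1 ∧ val4 π 3 = N + 2 := by
  simp only [Matches, Fin.forall_fin_succ, Fin.ext_iff, IsEmpty.forall_iff, and_true]
  exact Iff.rfl

theorem matches_blk321 : Matches (k := N + 1) blk321 π ↔
    val4 π 1 = N + 3 ∧ val4 π 2 = N + 2 ∧ val4 π 3 = N + 1 := by
  simp only [Matches, Fin.forall_fin_succ, Fin.ext_iff, IsEmpty.forall_iff, and_true]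
  exact Iff.rfl

theorem matches_blk3142 : Matches (k := N) blk3142 π ↔
    val4 π 0 = N + 2 ∧ val4 π 1 = N ∧ val4 π 2 = N + 3 ∧ val4 π 3 = N + 1 := by
  simp only [Matches, Fin.forall_fin_succ, Fin.ext_iff, IsEmpty.forall_iff, and_true]
  exact Iff.rfl

/-- A conforming permutation of length at least `4` ends in one of the six blocks. -/
theorem suffix_cases (hπ : Conforming π) :
    Matches (k := N + 3) blk1 π ∨ Matches (k := N + 2) blk21 π ∨ Matches (k := N + 1) blk231 π ∨
    Matches (k := N + 1) blk312 π ∨ Matches (k := N + 1) blk321 π ∨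
    Matches (k := N) blk3142 π := by
  rw [matches_blk1, matches_blk21, matches_blk231, matches_blk312, matches_blk321, matches_blk3142]
  -- `A` is the sum over the first `N` positions, common to all the partial sums used.
  obtain ⟨A, hA⟩ : ∃ A : ℤ, ∀ k, N ≤ k → pSum π k = A +
      ∑ i : Fin 4, if N + (i : ℕ) < k then ((val4 π i : ℤ) - ((N + (i : ℕ) : ℕ) : ℤ)) else 0 := by
    refine ⟨∑ j : Fin N, ((π (Fin.castAdd 4 j) : ℤ) - (j : ℤ)), fun k hk => ?_⟩
    unfold pSum
    rw [Fin.sum_univ_add]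
    congr 1
    exact Finset.sum_congr rfl fun j _ => if_pos (by have := j.isLt; simp; omega)
  have h0 := (hA N le_rfl).symm.trans_le (hπ N (by omega))
  have h1 := (hA (N + 1) (by omega)).symm.trans_le (hπ (N + 1) (by omega))
  have h2 := (hA (N + 2) (by omega)).symm.trans_le (hπ (N + 2) (by omega))
  have h3 := (hA (N + 3) (by omega)).symm.trans_le (hπ (N + 3) (by omega))
  have h4 := (hA (N + 4) (by omega)).symm.trans (pSum_of_le π le_rfl)
  simp [Fin.sum_univ_four] at h0 h1 h2 h3 h4
  have hb : ∀ i, val4 π i < N + 4 := fun i => (π (Fin.natAdd N i)).isLt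
  have hne : ∀ i j, i ≠ j → val4 π i ≠ val4 π j := fun i j hij h =>
    hij (Fin.natAdd_injective 4 N (π.injective (Fin.ext h)))
  have b0 := hb 0
  have b1 := hb 1
  have b2 := hb 2
  have b3 := hb 3
  have n01 := hne 0 1 (by decide)
  have n02 := hne 0 2 (by decide)
  have n03 := hne 0 3 (by decide)
  have n12 := hne 1 2 (by decide)
  have n13 := hne 1 3 (by decide)
  have n23 := hne 2 3 (by decide)
  -- Read the values from the right end; each bound leaves only a few possibilities.
  have c3 : val4 π 3 = N + 3 ∨ val4 π 3 = N + 2 ∨ val4 π 3 = N + 1 := by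
    clear h0 h1 h2 hA n01 n02 n03 n12 n13 n23; omega
  rcases c3 with c3 | c3 | c3
  · exact Or.inl c3
  · have c2 : val4 π 2 = N + 3 ∨ val4 π 2 = N + 1 := by
      clear h0 h1 h3 hA n01 n02 n03 n12 n13; omega
    rcases c2 with c2 | c2
    · exact Or.inr (Or.inl ⟨c2, c3⟩)
    · have c1 : val4 π 1 = N + 3 := by
        clear h0 h2 h3 hA n01 n02 n03; omega
      simp [c1, c2, c3]
  · have c2 : val4 π 2 = N + 3 ∨ val4 π 2 = N + 2 := by
      clear h0 h1 h3 hA n01 n02 n03 n12 n13; omega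
    rcases c2 with c2 | c2
    · have c1 : val4 π 1 = N + 2 ∨ val4 π 1 = N := by
        clear h0 h2 h3 hA n01 n02 n03; omega
      rcases c1 with c1 | c1
      · simp [c1, c2, c3]
      · have c0 : val4 π 0 = N + 2 := by
          clear h1 h2 h3 hA; omega
        simp [c0, c1, c2, c3]
    · have c1 : val4 π 1 = N + 3 := by
        clear h0 h2 h3 hA n01 n02 n03; omega
      simp [c1, c2, c3]

end matches_iff

theorem card_filter_matches {k m : ℕ} {β : Equiv.Perm (Fin m)} (hβ : Conforming β) :
    (∑ π : Equiv.Perm (Fin (k + m)) with Conforming π, if Matches β π then 1 else 0)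
      = bCount k := by
  rw [← card_matches hβ, Nat.card_eq_fintype_card, Fintype.card_subtype, ← Finset.filter_filter,
    Finset.card_filter]

theorem bCount_add_four (N : ℕ) :
    bCount (N + 4) = bCount (N + 3) + bCount (N + 2) + 3 * bCount (N + 1) + bCount N := by
  -- The lengths `N + 3 + 1`, `N + 2 + 2`, … agree with `N + 4` definitionally.
  have e1 : (∑ π : Equiv.Perm (Fin (N + 4)) with Conforming π,
      if Matches (k := N + 3) blk1 π then 1 else 0) = bCount (N + 3) :=
    card_filter_matches (k := N + 3) (β := blk1) (by decide)
  have e2 : (∑ π : Equiv.Perm (Fin (N + 4)) with Conforming π,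
      if Matches (k := N + 2) blk21 π then 1 else 0) = bCount (N + 2) :=
    card_filter_matches (k := N + 2) (β := blk21) (by decide)
  have e3 : (∑ π : Equiv.Perm (Fin (N + 4)) with Conforming π,
      if Matches (k := N + 1) blk231 π then 1 else 0) = bCount (N + 1) :=
    card_filter_matches (k := N + 1) (β := blk231) (by decide)
  have e4 : (∑ π : Equiv.Perm (Fin (N + 4)) with Conforming π,
      if Matches (k := N + 1) blk312 π then 1 else 0) = bCount (N + 1) :=
    card_filter_matches (k := N + 1) (β := blk312) (by decide)
  have e5 : (∑ π : Equiv.Perm (Fin (N + 4)) with Conforming π,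
      if Matches (k := N + 1) blk321 π then 1 else 0) = bCount (N + 1) :=
    card_filter_matches (k := N + 1) (β := blk321) (by decide)
  have e6 : (∑ π : Equiv.Perm (Fin (N + 4)) with Conforming π,
      if Matches (k := N) blk3142 π then 1 else 0) = bCount N :=
    card_filter_matches (k := N) (β := blk3142) (by decide)
  have h : bCount (N + 4) = ∑ π : Equiv.Perm (Fin (N + 4)) with Conforming π,
      ((if Matches (k := N + 3) blk1 π then 1 else 0) +
      (if Matches (k := N + 2) blk21 π then 1 else 0) +
      (if Matches (k := N + 1) blk231 π then 1 else 0) +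
      (if Matches (k := N + 1) blk312 π then 1 else 0) +
      (if Matches (k := N + 1) blk321 π then 1 else 0) +
      (if Matches (k := N) blk3142 π then 1 else 0)) := by
    rw [bCount, Nat.card_eq_fintype_card, Fintype.card_subtype, Finset.card_eq_sum_ones]
    refine Finset.sum_congr rfl fun π hπ => ?_
    have hc := suffix_cases π (Finset.mem_filter.1 hπ).2
    simp only [matches_blk1, matches_blk21, matches_blk231, matches_blk312, matches_blk321,
      matches_blk3142] at hc ⊢
    -- The six patterns are pairwise incompatible, so exactly one indicator is `1`.
    rcases hc with h | ⟨h2, h3⟩ | ⟨h1, h2, h3⟩ | ⟨h1, h2, h3⟩ | ⟨h1, h2, h3⟩ | ⟨h0, h1, h2, h3⟩ <;>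
      simp [*]
  simp only [Finset.sum_add_distrib] at h
  rw [h, e1, e2, e3, e4, e5, e6]
  ring

theorem bCount_eq_card (n : ℕ) :
    bCount n = (Finset.univ.filter fun π : Equiv.Perm (Fin n) => Conforming π).card := by
  rw [bCount, Nat.card_eq_fintype_card, Fintype.card_subtype]

theorem bCount_zero : bCount 0 = 1 := by rw [bCount_eq_card]; decide +kernel
theorem bCount_one : bCount 1 = 1 := by rw [bCount_eq_card]; decide +kernel
theorem bCount_two : bCount 2 = 2 := by rw [bCount_eq_card]; decide +kernel
theorem bCount_three : bCount 3 = 6 := by rw [bCount_eq_card]; decide +kernel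

/-- The numerical description of `π = α ⊕ β` used in the final statement. -/
theorem exists_front {k m : ℕ} {β : Equiv.Perm (Fin m)} {π : Equiv.Perm (Fin (k + m))}
    (hπ : Conforming π) (h : Matches β π) :
    (∃ α : Equiv.Perm (Fin k), Conforming α ∧
      ∀ i : Fin k, (α i : ℕ) = (π (Fin.castAdd m i) : ℕ)) ∧
    ∀ (j : ℕ) (hj : j < m), (π ⟨k + j, by omega⟩ : ℕ) = k + (β ⟨j, hj⟩ : ℕ) := by
  refine ⟨?_, fun j hj => congrArg Fin.val (h ⟨j, hj⟩)⟩
  obtain ⟨α, rfl⟩ := exists_dsum_of_matches h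
  exact ⟨α, ((conforming_dsum _ _).1 hπ).1, fun i => by simp⟩

theorem stmt_19 :
    (∀ n : ℕ, 1 ≤ n → n ≤ 3 → bCount n = Nat.factorial n) ∧
    bCount 4 = 12 ∧
    (∀ n : ℕ, 5 ≤ n →
      bCount n = bCount (n - 1) + bCount (n - 2) + 3 * bCount (n - 3) + bCount (n - 4)) ∧
    (∀ n : ℕ, 5 ≤ n → ∀ π : Equiv.Perm (Fin n), Conforming π →
      ∃ m : ℕ, ∃ hm : m < n, ∃ t : List ℕ, ∃ ht : t ∈ suffixBlocks,
        ∃ htl : t.length = m,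
          (∃ α : Equiv.Perm (Fin (n - m)), Conforming α ∧
            ∀ i : Fin (n - m), (α i : ℕ) = (π ⟨(i : ℕ), by have := i.isLt; omega⟩ : ℕ)) ∧
          ∀ (j : ℕ) (hj : j < m),
            (π ⟨n - m + j, by omega⟩ : ℕ) = n - m + t[j]'(by omega)) := by
  refine ⟨fun n h1 h3 => ?_, ?_, fun n hn => ?_, fun n hn π hπ => ?_⟩
  · interval_cases n
    · exact bCount_one
    · exact bCount_two
    · exact bCount_three
  · rw [bCount_add_four 0, bCount_zero, bCount_one, bCount_two, bCount_three]
  · obtain ⟨N, rfl⟩ := Nat.exists_eq_add_of_le' (show 4 ≤ n by omega)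
    exact bCount_add_four N
  · obtain ⟨N, rfl⟩ := Nat.exists_eq_add_of_le' (show 4 ≤ n by omega)
    rcases suffix_cases π hπ with h | h | h | h | h | h
    · obtain ⟨ha, hb⟩ := exists_front (k := N + 3) hπ h
      refine ⟨1, by omega, [0], by decide, rfl, ha, fun j hj => (hb j hj).trans ?_⟩
      interval_cases j <;> rfl
    · obtain ⟨ha, hb⟩ := exists_front (k := N + 2) hπ h
      refine ⟨2, by omega, [1, 0], by decide, rfl, ha, fun j hj => (hb j hj).trans ?_⟩
      interval_cases j <;> rfl
    · obtain ⟨ha, hb⟩ := exists_front (k := N + 1) hπ h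
      refine ⟨3, by omega, [1, 2, 0], by decide, rfl, ha, fun j hj => (hb j hj).trans ?_⟩
      interval_cases j <;> rfl
    · obtain ⟨ha, hb⟩ := exists_front (k := N + 1) hπ h
      refine ⟨3, by omega, [2, 0, 1], by decide, rfl, ha, fun j hj => (hb j hj).trans ?_⟩
      interval_cases j <;> rfl
    · obtain ⟨ha, hb⟩ := exists_front (k := N + 1) hπ h
      refine ⟨3, by omega, [2, 1, 0], by decide, rfl, ha, fun j hj => (hb j hj).trans ?_⟩
      interval_cases j <;> rfl
    · obtain ⟨ha, hb⟩ := exists_front (k := N) hπ h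
      refine ⟨4, by omega, [2, 0, 3, 1], by decide, rfl, ha, fun j hj => (hb j hj).trans ?_⟩
      interval_cases j <;> rfl
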